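/- arXiv:1303.5097 — 3 statements merged into one kernel-verified Lean document; each statement's English description precedes it below -/
import Mathlib

section
/- Let Φ be a real M×N matrix, K ≥ 1, and suppose there exist constants ν > 0 and δ2K, δ3K ∈ (0,1) such that: (i) for every u ∈ Σ_{2K}, |(1/M)·‖Φu‖₁ − ν‖u‖₂| ≤ δ2K·‖u‖₂, and (ii) for every u ∈ Σ_{2K} and v ∈ Σ_K with ⟨u,v⟩ = 0, |(1/M)·⟨sign(Φu), Φv⟩| ≤ δ3K·‖v‖₂. Assume δ2K + δ3K ≤ ν − 1/2. Let x ∈ ℝ^N, let n ∈ ℝ^M satisfy ‖n‖₁ ≤ ε, and set y = Φx + n. If x* ∈ ℝ^N satisfies ‖y − Φx*‖₁ ≤ ε and ‖x*‖₁ ≤ ‖u‖₁ for every u ∈ ℝ^N with ‖y − Φu‖₁ ≤ ε (i.e., x* is a minimizer of the ℓ1 norm over the ℓ1 fidelity constraint), then ‖x* − x‖₂ ≤ 8·ε/M + 12·e₀(K), where e₀(K) = ‖x − x_K‖₁/√K and x_K is a best K-term approximation of x (the vector keeping only K entries of x of largest absolute value and zeroing all others). -/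
/-!
The proof is the cone-plus-blocks argument of compressed sensing, with the ℓ1 fidelity handled
through the sign vector. Put `h = xstar - x` and let `S` be the support of the best `K`-term
approximation. Minimality of `xstar` puts `h` in a cone: `‖h_{Sᶜ}‖₁ ≤ ‖h_S‖₁ + 2 ‖x - xK‖₁`.
Let `T` hold the `K` largest entries of `h` off `S` (lemma `exists_top`) and `W = S ∪ T`, so that
`h_W` is `2K`-sparse. Pairing `Φ h` with `sign (Φ h_W)` gives
`‖Φ h‖₁ / M ≥ ‖Φ h_W‖₁ / M - |⟨sign (Φ h_W), Φ h_{Wᶜ}⟩| / M`; the first term is controlled by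
hypothesis (i), and the second, after cutting `Wᶜ` into blocks of size `K` of decreasing entries,
by hypothesis (ii).

The block decomposition is isolated in `block_tail`: a subadditive functional bounded by
`c ‖·‖₂` on blocks of size at most `K` is bounded by `c ‖h_A‖₁ / √K` on `h_{A \ T}`. It is used both
for the pairing with `sign (Φ h_W)` and for the Euclidean norm itself. Since
`‖h_{Sᶜ}‖₁ / √K ≤ ‖h_W‖₂ + 2 e₀` and `‖Φ h‖₁ ≤ 2ε`, this yields `‖h_W‖₂ ≤ 4ε/M + 4 δ3K e₀` and
`‖h‖₂ ≤ 2 ‖h_W‖₂ + 2 e₀ ≤ 8ε/M + 10 e₀`.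
-/

open Finset MeasureTheory ProbabilityTheory Real

/-- componentwise sign function: 1 if positive, -1 otherwise -/
noncomputable def sgn (t : ℝ) : ℝ := if 0 < t then 1 else -1

/-- ℓ1 norm -/
noncomputable def l1 {m : ℕ} (w : Fin m → ℝ) : ℝ := ∑ j, |w j|

/-- ℓ2 (Euclidean) norm -/
noncomputable def l2 {m : ℕ} (w : Fin m → ℝ) : ℝ := Real.sqrt (∑ j, w j ^ 2)

/-- ℓ0 "norm": number of nonzero entries -/
noncomputable def l0 {m : ℕ} (w : Fin m → ℝ) : ℕ :=
  (Finset.univ.filter fun i => w i ≠ 0).card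

/-- K-sparsity: membership in Σ_K -/
noncomputable def sparse {n : ℕ} (K : ℕ) (u : Fin n → ℝ) : Prop := l0 u ≤ K

/-- Euclidean inner product -/
noncomputable def ip {m : ℕ} (u v : Fin m → ℝ) : ℝ := ∑ j, u j * v j

/-- restriction of a vector to a set of indices (zero outside) -/
noncomputable def restrict {n : ℕ} (u : Fin n → ℝ) (S : Finset (Fin n)) : Fin n → ℝ :=
  fun i => if i ∈ S then u i else 0

/-- `xK` is a best K-term approximation of `x` -/
noncomputable def IsBestKTermApprox {n : ℕ} (K : ℕ) (x xK : Fin n → ℝ) : Prop :=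
  ∃ S : Finset (Fin n), S.card = K ∧ (∀ i ∈ S, xK i = x i) ∧ (∀ i ∉ S, xK i = 0) ∧
    ∀ i ∈ S, ∀ j ∉ S, |x j| ≤ |x i|

lemma sum_abs_nonneg {N : ℕ} (h : Fin N → ℝ) (B : Finset (Fin N)) : 0 ≤ ∑ i ∈ B, |h i| :=
  Finset.sum_nonneg fun _ _ => abs_nonneg _

lemma l2_nonneg {N : ℕ} (w : Fin N → ℝ) : 0 ≤ l2 w := Real.sqrt_nonneg _

lemma l2_eq_norm {N : ℕ} (w : Fin N → ℝ) : l2 w = ‖WithLp.toLp 2 w‖ := by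
  rw [EuclideanSpace.norm_eq]
  simp [l2]

lemma l2_add_le {N : ℕ} (u v : Fin N → ℝ) : l2 (u + v) ≤ l2 u + l2 v := by
  simp only [l2_eq_norm, WithLp.toLp_add]
  exact norm_add_le _ _

lemma l2_restrict {N : ℕ} (h : Fin N → ℝ) (B : Finset (Fin N)) :
    l2 (_root_.restrict h B) = Real.sqrt (∑ i ∈ B, h i ^ 2) := by
  simp [l2, _root_.restrict, ite_pow, Finset.sum_ite_mem]

lemma sparse_restrict {N : ℕ} (h : Fin N → ℝ) (B : Finset (Fin N)) {k : ℕ} (hB : B.card ≤ k) :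
    sparse k (_root_.restrict h B) := by
  refine le_trans (Finset.card_le_card ?_) hB
  intro i hi
  by_contra hiB
  simp [_root_.restrict, hiB] at hi

lemma restrict_add_sdiff {N : ℕ} (h : Fin N → ℝ) {T B : Finset (Fin N)} (hT : T ⊆ B) :
    _root_.restrict h B = _root_.restrict h T + _root_.restrict h (B \ T) := by
  funext i
  have := @hT i
  by_cases h1 : i ∈ T <;> by_cases h2 : i ∈ B <;> simp_all [_root_.restrict]

lemma ip_restrict_of_disjoint {N : ℕ} (h : Fin N → ℝ) {A B : Finset (Fin N)}
    (hAB : Disjoint A B) : ip (_root_.restrict h A) (_root_.restrict h B) = 0 := by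
  refine Finset.sum_eq_zero fun i _ => ?_
  by_cases hA : i ∈ A
  · simp [_root_.restrict, Finset.disjoint_left.mp hAB hA]
  · simp [_root_.restrict, hA]

lemma l2_restrict_le_of_bound {N K : ℕ} (h : Fin N → ℝ) (B : Finset (Fin N)) (hB : B.card ≤ K)
    {m : ℝ} (hm : 0 ≤ m) (hb : ∀ j ∈ B, |h j| ≤ m) :
    l2 (_root_.restrict h B) ≤ Real.sqrt K * m := by
  rw [l2_restrict]
  refine Real.sqrt_le_iff.mpr ⟨by positivity, ?_⟩
  rw [mul_pow, Real.sq_sqrt (Nat.cast_nonneg K)]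
  calc ∑ i ∈ B, h i ^ 2 ≤ ∑ _i ∈ B, m ^ 2 :=
        Finset.sum_le_sum fun i hi => sq_le_sq' (by linarith [neg_abs_le (h i), hb i hi])
          ((le_abs_self _).trans (hb i hi))
    _ = B.card * m ^ 2 := by simp
    _ ≤ K * m ^ 2 := by gcongr

lemma sum_abs_le_sqrt_mul_l2 {N K : ℕ} (h : Fin N → ℝ) {S W : Finset (Fin N)} (hS : S.card ≤ K)
    (hSW : S ⊆ W) : ∑ i ∈ S, |h i| ≤ Real.sqrt K * l2 (_root_.restrict h W) := by
  rw [l2_restrict, ← Real.sqrt_mul (Nat.cast_nonneg K)]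
  refine Real.le_sqrt_of_sq_le ?_
  have h1 := sq_sum_le_card_mul_sum_sq (s := S) (f := fun i => |h i|)
  simp only [sq_abs] at h1
  have h2 : ∑ i ∈ S, h i ^ 2 ≤ ∑ i ∈ W, h i ^ 2 :=
    Finset.sum_le_sum_of_subset_of_nonneg hSW fun _ _ _ => sq_nonneg _
  calc _ ≤ _ := h1
    _ ≤ (K : ℝ) * ∑ i ∈ W, h i ^ 2 := by gcongr

/-- A set with at least `K` elements contains `K` indices of largest absolute value, separated from
the remaining ones by a threshold `m`. -/
lemma exists_top {N : ℕ} (h : Fin N → ℝ) (B : Finset (Fin N)) (K : ℕ) (hK : K ≤ B.card) :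
    ∃ T ⊆ B, T.card = K ∧ ∃ m : ℝ, 0 ≤ m ∧ (∀ i ∈ T, m ≤ |h i|) ∧ ∀ j ∈ B \ T, |h j| ≤ m := by
  induction K with
  | zero =>
    refine ⟨∅, by simp, by simp, ∑ i ∈ B, |h i|, sum_abs_nonneg h B, by simp, ?_⟩
    intro j hj
    exact Finset.single_le_sum (f := fun i => |h i|) (fun _ _ => abs_nonneg _) (by simpa using hj)
  | succ k ih =>
    obtain ⟨T, hTB, hTc, m, hm, hT, hR⟩ := ih (by omega)
    have hne : (B \ T).Nonempty := by
      rw [← Finset.card_pos, Finset.card_sdiff_of_subset hTB]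
      omega
    obtain ⟨i, hi, hmax⟩ := Finset.exists_max_image (B \ T) (fun i => |h i|) hne
    have hi' := Finset.mem_sdiff.mp hi
    refine ⟨insert i T, Finset.insert_subset hi'.1 hTB, by simp [hi'.2, hTc], |h i|,
      abs_nonneg _, ?_, ?_⟩
    · intro j hj
      rcases Finset.mem_insert.mp hj with rfl | hj
      · exact le_rfl
      · exact (hR i hi).trans (hT j hj)
    · intro j hj
      simp only [Finset.mem_sdiff, Finset.mem_insert, not_or] at hj
      exact hmax j (by simp [hj.1, hj.2.2])

lemma sqrt_mul_threshold_le {N K : ℕ} (hK : 1 ≤ K) (h : Fin N → ℝ) {T : Finset (Fin N)}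
    (hT : T.card = K) {m : ℝ} (hm : ∀ i ∈ T, m ≤ |h i|) :
    Real.sqrt K * m ≤ (∑ i ∈ T, |h i|) / Real.sqrt K := by
  have hpos : 0 < Real.sqrt K := Real.sqrt_pos.mpr (by exact_mod_cast hK)
  rw [le_div_iff₀ hpos]
  have h1 : (K : ℝ) * m ≤ ∑ i ∈ T, |h i| := by
    have := Finset.card_nsmul_le_sum T (fun i => |h i|) m hm
    rwa [nsmul_eq_mul, hT] at this
  have h2 : Real.sqrt K * Real.sqrt K = K := Real.mul_self_sqrt (Nat.cast_nonneg K)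
  calc Real.sqrt K * m * Real.sqrt K = K * m := by rw [mul_right_comm, h2]
    _ ≤ _ := h1

/-- The first block of `B` costs at most `c √K m`, and each later block is charged to the ℓ1 mass
of its predecessor, whose entries dominate it. -/
lemma block_bound {N K : ℕ} (hK : 1 ≤ K) (h : Fin N → ℝ) (p : (Fin N → ℝ) → ℝ) {c : ℝ}
    (hc : 0 ≤ c) (hadd : ∀ u v, p (u + v) ≤ p u + p v) (B : Finset (Fin N)) :
    (∀ B' ⊆ B, B'.card ≤ K → p (_root_.restrict h B') ≤ c * l2 (_root_.restrict h B')) →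
    ∀ m : ℝ, 0 ≤ m → (∀ j ∈ B, |h j| ≤ m) →
    p (_root_.restrict h B) ≤ c * (Real.sqrt K * m + (∑ i ∈ B, |h i|) / Real.sqrt K) := by
  induction B using Finset.strongInduction with
  | H B ih =>
  intro hp m hm hb
  rcases le_or_gt B.card K with hcard | hcard
  · refine (hp B subset_rfl hcard).trans (mul_le_mul_of_nonneg_left ?_ hc)
    have h1 := l2_restrict_le_of_bound h B hcard hm hb
    have h2 := div_nonneg (sum_abs_nonneg h B) (Real.sqrt_nonneg K)
    linarith
  · obtain ⟨T, hTB, hTc, m', hm', hT, hR⟩ := exists_top h B K hcard.le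
    have hss : B \ T ⊂ B := Finset.sdiff_ssubset hTB (Finset.card_pos.mp (by omega))
    have h1 := ih _ hss (fun B' hB' => hp B' (hB'.trans hss.subset)) m' hm' hR
    have h2 : p (_root_.restrict h T) ≤ c * (Real.sqrt K * m) :=
      (hp T hTB hTc.le).trans (mul_le_mul_of_nonneg_left
        (l2_restrict_le_of_bound h T hTc.le hm fun j hj => hb j (hTB hj)) hc)
    have h3 := mul_le_mul_of_nonneg_left (sqrt_mul_threshold_le hK h hTc hT) hc
    rw [restrict_add_sdiff h hTB, ← Finset.sum_sdiff hTB, add_div]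
    have h4 := hadd (_root_.restrict h T) (_root_.restrict h (B \ T))
    linarith

/-- After removal of the top `K` entries of `A`, functionals bounded by `c ‖·‖₂` on blocks
are bounded by `c ‖h_A‖₁ / √K` on the rest. The set `T` does not depend on the functional. -/
lemma block_tail {N K : ℕ} (hK : 1 ≤ K) (h : Fin N → ℝ) (A : Finset (Fin N)) :
    ∃ T ⊆ A, T.card ≤ K ∧ ∀ (p : (Fin N → ℝ) → ℝ) (c : ℝ), 0 ≤ c →
      (∀ u v, p (u + v) ≤ p u + p v) →
      (∀ B ⊆ A \ T, B.card ≤ K → p (_root_.restrict h B) ≤ c * l2 (_root_.restrict h B)) →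
      p (_root_.restrict h (A \ T)) ≤ c * ((∑ i ∈ A, |h i|) / Real.sqrt K) := by
  rcases le_or_gt A.card K with hcard | hcard
  · refine ⟨A, subset_rfl, hcard, fun p c hc _ hp => ?_⟩
    have h1 := hp (A \ A) subset_rfl (by simp)
    have h2 : l2 (_root_.restrict h (A \ A)) = 0 := by simp [l2_restrict]
    rw [h2, mul_zero] at h1
    exact h1.trans (mul_nonneg hc (div_nonneg (sum_abs_nonneg h A) (Real.sqrt_nonneg _)))
  · obtain ⟨T, hTA, hTc, m, hm, hT, hR⟩ := exists_top h A K hcard.le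
    refine ⟨T, hTA, hTc.le, fun p c hc hadd hp => ?_⟩
    have h1 := block_bound hK h p hc hadd (A \ T) hp m hm hR
    have h2 := mul_le_mul_of_nonneg_left (sqrt_mul_threshold_le hK h hTc hT) hc
    rw [← Finset.sum_sdiff hTA, add_div]
    linarith

lemma ip_add {m : ℕ} (s u v : Fin m → ℝ) : ip s (u + v) = ip s u + ip s v := by
  simp [ip, mul_add, Finset.sum_add_distrib]

lemma ip_sgn_self {m : ℕ} (w : Fin m → ℝ) : ip (fun j => sgn (w j)) w = l1 w := by
  refine Finset.sum_congr rfl fun j _ => ?_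
  simp only [sgn]
  split_ifs with hj
  · rw [abs_of_pos hj, one_mul]
  · rw [abs_of_nonpos (not_lt.mp hj)]
    ring

lemma ip_sgn_le {m : ℕ} (u w : Fin m → ℝ) : ip (fun j => sgn (u j)) w ≤ l1 w := by
  refine Finset.sum_le_sum fun j _ => ?_
  simp only [sgn]
  split_ifs
  · rw [one_mul]
    exact le_abs_self _
  · rw [neg_one_mul]
    exact neg_le_abs _

lemma l1_sub_le {m : ℕ} (u v : Fin m → ℝ) : l1 (u - v) ≤ l1 u + l1 v := by
  rw [l1, l1, l1, ← Finset.sum_add_distrib]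
  exact Finset.sum_le_sum fun j _ => abs_sub (u j) (v j)

/-- Cone condition: a competitor of no larger ℓ1 norm deviates from `x` off `S` by no more than it
does on `S`, up to twice the ℓ1 mass of `x` off `S`. -/
lemma cone_condition {N : ℕ} (x z : Fin N → ℝ) (S : Finset (Fin N)) (hz : l1 z ≤ l1 x) :
    ∑ i ∈ Sᶜ, |(z - x) i| ≤ ∑ i ∈ S, |(z - x) i| + 2 * ∑ i ∈ Sᶜ, |x i| := by
  rw [l1, l1, ← Finset.sum_add_sum_compl S, ← Finset.sum_add_sum_compl S] at hz
  have h1 : ∑ i ∈ S, |x i| ≤ ∑ i ∈ S, |z i| + ∑ i ∈ S, |(z - x) i| := by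
    rw [← Finset.sum_add_distrib]
    refine Finset.sum_le_sum fun i _ => ?_
    have := abs_sub (z i) ((z - x) i)
    simpa using this
  have h2 : ∑ i ∈ Sᶜ, |(z - x) i| ≤ ∑ i ∈ Sᶜ, |z i| + ∑ i ∈ Sᶜ, |x i| := by
    rw [← Finset.sum_add_distrib]
    exact Finset.sum_le_sum fun i _ => abs_sub (z i) (x i)
  linarith

theorem bpdn_l1_instance_optimality
    {M N : ℕ} (Φ : Matrix (Fin M) (Fin N) ℝ) (K : ℕ) (hK : 1 ≤ K)
    (ν δ2K δ3K : ℝ) (hν : 0 < ν)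
    (hδ2 : δ2K ∈ Set.Ioo (0 : ℝ) 1) (hδ3 : δ3K ∈ Set.Ioo (0 : ℝ) 1)
    (hΦ1 : ∀ u : Fin N → ℝ, sparse (2 * K) u →
      |(1 / (M : ℝ)) * l1 (Φ.mulVec u) - ν * l2 u| ≤ δ2K * l2 u)
    (hΦ2 : ∀ u v : Fin N → ℝ, sparse (2 * K) u → sparse K v → ip u v = 0 →
      |(1 / (M : ℝ)) * ip (fun j => sgn (Φ.mulVec u j)) (Φ.mulVec v)| ≤ δ3K * l2 v)
    (hsum : δ2K + δ3K ≤ ν - 1 / 2)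
    (x : Fin N → ℝ) (ε : ℝ) (n : Fin M → ℝ) (hn : l1 n ≤ ε)
    (y : Fin M → ℝ) (hy : y = Φ.mulVec x + n)
    (xstar : Fin N → ℝ)
    (hfeas : l1 (y - Φ.mulVec xstar) ≤ ε)
    (hmin : ∀ u : Fin N → ℝ, l1 (y - Φ.mulVec u) ≤ ε → l1 xstar ≤ l1 u)
    (xK : Fin N → ℝ) (hxK : IsBestKTermApprox K x xK) :
    l2 (xstar - x) ≤ 8 * ε / (M : ℝ) + 12 * (l1 (x - xK) / Real.sqrt K) := by
  obtain ⟨S, hSc, hxS, hxS', -⟩ := hxK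
  have hσ : l1 (x - xK) = ∑ i ∈ Sᶜ, |x i| := by
    rw [l1, ← Finset.sum_add_sum_compl S, Finset.sum_eq_zero, zero_add]
    · refine Finset.sum_congr rfl fun i hi => ?_
      simp [hxS' i (Finset.mem_compl.mp hi)]
    · intro i hi
      simp [hxS i hi]
  have hxstar : l1 xstar ≤ l1 x := hmin x (by simpa [hy] using hn)
  have hcone := cone_condition x xstar S hxstar
  rw [← hσ] at hcone
  set h := xstar - x with hh
  -- both `x` and `xstar` are feasible
  have hΦh : l1 (Φ.mulVec h) ≤ 2 * ε := by
    have h1 := l1_sub_le n (y - Φ.mulVec xstar)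
    have h2 : n - (y - Φ.mulVec xstar) = Φ.mulVec h := by
      rw [hh, Matrix.mulVec_sub, hy]
      abel
    rw [h2] at h1
    linarith
  obtain ⟨T, hTS, hTc, htail⟩ := block_tail hK h Sᶜ
  have hcompl : Sᶜ \ T = (S ∪ T)ᶜ := by
    ext i
    simp
  rw [hcompl] at htail
  set W := S ∪ T with hW
  have hWc : W.card ≤ 2 * K := (Finset.card_union_le S T).trans (by omega)
  have hpos : 0 < Real.sqrt K := Real.sqrt_pos.mpr (by exact_mod_cast hK)
  set e := l1 (x - xK) / Real.sqrt K with he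
  have he0 : 0 ≤ e := by
    rw [he, hσ]
    exact div_nonneg (sum_abs_nonneg x _) hpos.le
  set a := l2 (_root_.restrict h W) with ha
  have hq : (∑ i ∈ Sᶜ, |h i|) / Real.sqrt K ≤ a + 2 * e := by
    have h1 := sum_abs_le_sqrt_mul_l2 h hSc.le (Finset.subset_union_left (s₁ := S) (s₂ := T))
    rw [div_le_iff₀ hpos]
    have h2 : e * Real.sqrt K = l1 (x - xK) := div_mul_cancel₀ _ hpos.ne'
    linarith
  have hsplit : h = _root_.restrict h W + _root_.restrict h Wᶜ := by
    have h1 := restrict_add_sdiff h (Finset.subset_univ W)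
    rw [← Finset.compl_eq_univ_sdiff] at h1
    rw [← h1]
    funext i
    simp [_root_.restrict]
  have htail2 : l2 (_root_.restrict h Wᶜ) ≤ a + 2 * e := by
    have h1 := htail l2 1 zero_le_one l2_add_le (fun B _ _ => by rw [one_mul])
    linarith
  set s : Fin M → ℝ := fun j => sgn (Φ.mulVec (_root_.restrict h W) j) with hs
  have htailΦ : |1 / (M : ℝ) * ip s (Φ.mulVec (_root_.restrict h Wᶜ))| ≤ δ3K * (a + 2 * e) := by
    refine (htail (fun v => |1 / (M : ℝ) * ip s (Φ.mulVec v)|) δ3K hδ3.1.le ?_ ?_).trans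
      (mul_le_mul_of_nonneg_left hq hδ3.1.le)
    · intro u v
      simp only [Matrix.mulVec_add, ip_add, mul_add]
      exact abs_add_le _ _
    · intro B hB hBc
      refine hΦ2 _ _ (sparse_restrict h W hWc) (sparse_restrict h B hBc)
        (ip_restrict_of_disjoint h ?_)
      exact Finset.disjoint_of_subset_right hB disjoint_compl_right
  have hlow := (abs_le.mp (hΦ1 _ (sparse_restrict h W hWc))).1
  -- only `0 ≤ 1 / M` is needed, so `M = 0`, where `1 / M = 0`, is no exception
  have hpair : 1 / (M : ℝ) * l1 (Φ.mulVec (_root_.restrict h W))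
      + 1 / (M : ℝ) * ip s (Φ.mulVec (_root_.restrict h Wᶜ)) ≤ 1 / (M : ℝ) * (2 * ε) := by
    rw [← mul_add, ← ip_sgn_self, ← ip_add, ← Matrix.mulVec_add, ← hsplit]
    exact mul_le_mul_of_nonneg_left ((ip_sgn_le _ _).trans hΦh) (by positivity)
  have hlowΦ := (abs_le.mp htailΦ).1
  have ha0 : 0 ≤ a := l2_nonneg _
  have hl2 : l2 h ≤ a + l2 (_root_.restrict h Wᶜ) := by
    have h1 := l2_add_le (_root_.restrict h W) (_root_.restrict h Wᶜ)
    rwa [← hsplit] at h1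
  have hhalf : 1 / 2 * a ≤ (ν - δ2K - δ3K) * a :=
    mul_le_mul_of_nonneg_right (by linarith) ha0
  have hδe : δ3K * e ≤ e := mul_le_of_le_one_left he0 hδ3.2.le
  have hε : 8 * ε / (M : ℝ) = 4 * (1 / (M : ℝ) * (2 * ε)) := by ring
  rw [hε]
  linarith
end

section
/- Let h ∈ ℝ^N, K ≥ 1, and let T₀, T₁, …, T_L be pairwise disjoint subsets of {1,…,N} such that T₁ ∪ … ∪ T_L ⊇ supp(h) \ T₀, |T_k| = K for 1 ≤ k ≤ L−1, |T_L| ≤ K, and for every 1 ≤ k < L, every i ∈ T_k and every j ∈ T_{k+1} satisfy |h_i| ≥ |h_j|. Then Σ_{k=2}^{L} ‖h_{T_k}‖₂ ≤ (1/√K)·‖h_{T₀ᶜ}‖₁, where T₀ᶜ = {1,…,N} \ T₀. -/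
/-!
Every entry of `h` on the block `T (k + 1)` is bounded in absolute value by each entry on `T k`,
hence by their average `(∑ i ∈ T k, |h i|) / K`. As `T (k + 1)` has at most `K` elements, its
ℓ2 norm is at most `√K` times this average, i.e. `(1 / √K) * ∑ i ∈ T k, |h i|`
(`l2_restrict_le_of_dominated`). Summing over `1 ≤ k < L` and using that these blocks are
pairwise disjoint and avoid `T 0` bounds the total by the ℓ1 norm of `h` off `T 0`.
-/

open Finset MeasureTheory ProbabilityTheory Real

/-- If every entry of `h` on `B` is dominated by every entry on the `K`-element set `A`, and `B`
has at most `K` elements, then the ℓ2 norm on `B` is at most `1 / √K` times the ℓ1 norm on `A`. -/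
lemma l2_restrict_le_of_dominated {N : ℕ} (h : Fin N → ℝ) {K : ℕ} (hK : 1 ≤ K)
    {A B : Finset (Fin N)} (hA : A.card = K) (hB : B.card ≤ K)
    (hAB : ∀ i ∈ A, ∀ j ∈ B, |h j| ≤ |h i|) :
    l2 (restrict h B) ≤ (1 / Real.sqrt K) * ∑ i ∈ A, |h i| := by
  have hKpos : (0 : ℝ) < K := by exact_mod_cast hK
  have hS : 0 ≤ ∑ i ∈ A, |h i| := Finset.sum_nonneg fun i _ => abs_nonneg _
  set S := ∑ i ∈ A, |h i| with hSdef
  have hentry : ∀ j ∈ B, |h j| ≤ S / K := by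
    intro j hj
    have hcs := Finset.card_nsmul_le_sum A (fun i => |h i|) |h j| fun i hi => hAB i hi j hj
    rw [hA, nsmul_eq_mul] at hcs
    rw [le_div_iff₀ hKpos]
    linarith
  have hsq : ∑ j, restrict h B j ^ 2 = ∑ j ∈ B, h j ^ 2 := by
    simp [_root_.restrict, ite_pow, Finset.sum_ite_mem]
  have hbound : ∑ j ∈ B, h j ^ 2 ≤ K * (S / K) ^ 2 := by
    calc ∑ j ∈ B, h j ^ 2 ≤ B.card • (S / K) ^ 2 := by
          refine Finset.sum_le_card_nsmul _ _ _ fun j hj => ?_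
          rw [← sq_abs]
          exact pow_le_pow_left₀ (abs_nonneg _) (hentry j hj) 2
      _ ≤ K * (S / K) ^ 2 := by
          rw [nsmul_eq_mul]
          gcongr
  unfold l2
  rw [hsq]
  refine Real.sqrt_le_iff.mpr ⟨by positivity, hbound.trans_eq ?_⟩
  rw [mul_pow, div_pow, div_pow, Real.sq_sqrt hKpos.le]
  field_simp

theorem tail_l2_sum_le_l1
    {N : ℕ} (h : Fin N → ℝ) (K : ℕ) (hK : 1 ≤ K)
    (L : ℕ) (hL : 1 ≤ L) (T : ℕ → Finset (Fin N))
    (hdisj : ∀ k l, k ≤ L → l ≤ L → k ≠ l → Disjoint (T k) (T l))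
    (hcover : ∀ i, h i ≠ 0 → i ∉ T 0 → ∃ k, 1 ≤ k ∧ k ≤ L ∧ i ∈ T k)
    (hcard : ∀ k, 1 ≤ k → k < L → (T k).card = K)
    (hcardL : (T L).card ≤ K)
    (hmono : ∀ k, 1 ≤ k → k < L → ∀ i ∈ T k, ∀ j ∈ T (k + 1), |h j| ≤ |h i|) :
    ∑ k ∈ Finset.Icc 2 L, l2 (restrict h (T k)) ≤
      (1 / Real.sqrt K) * l1 (restrict h ((T 0)ᶜ)) := by
  have hblock : ∀ k ∈ Finset.Ico 1 L, l2 (restrict h (T (k + 1))) ≤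
      (1 / Real.sqrt K) * ∑ i ∈ T k, |h i| := by
    intro k hk
    obtain ⟨hk1, hkL⟩ := Finset.mem_Ico.mp hk
    refine l2_restrict_le_of_dominated h hK (hcard k hk1 hkL) ?_ (hmono k hk1 hkL)
    rcases (Nat.succ_le_of_lt hkL).lt_or_eq with hlt | heq
    · exact (hcard (k + 1) (by omega) hlt).le
    · have hkL' : k + 1 = L := heq
      rwa [hkL']
  have hshift : ∑ k ∈ Finset.Icc 2 L, l2 (restrict h (T k)) =
      ∑ k ∈ Finset.Ico 1 L, l2 (restrict h (T (k + 1))) := by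
    rw [Finset.sum_Ico_add' (fun k => l2 (restrict h (T k))) 1 L 1]
    rfl
  have hl1 : l1 (restrict h ((T 0)ᶜ)) = ∑ i ∈ (T 0)ᶜ, |h i| := by
    unfold l1 _root_.restrict
    rw [← Finset.sum_subset (Finset.subset_univ (T 0)ᶜ)]
    · exact Finset.sum_congr rfl fun i hi => by rw [if_pos hi]
    · intro i _ hi
      rw [if_neg hi, abs_zero]
  have hunion : ∑ k ∈ Finset.Ico 1 L, ∑ i ∈ T k, |h i| ≤ ∑ i ∈ (T 0)ᶜ, |h i| := by
    rw [← Finset.sum_biUnion]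
    · refine Finset.sum_le_sum_of_subset_of_nonneg ?_ fun i _ _ => abs_nonneg _
      intro i hi
      obtain ⟨k, hk, hik⟩ := Finset.mem_biUnion.mp hi
      obtain ⟨hk1, hkL⟩ := Finset.mem_Ico.mp hk
      exact Finset.mem_compl.mpr
        (Finset.disjoint_left.mp (hdisj k 0 hkL.le (Nat.zero_le L) (by omega)) hik)
    · intro k hk l hl hkl
      exact hdisj k l (Finset.mem_Ico.mp hk).2.le (Finset.mem_Ico.mp hl).2.le hkl
  rw [hshift, hl1]
  calc ∑ k ∈ Finset.Ico 1 L, l2 (restrict h (T (k + 1)))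
      ≤ ∑ k ∈ Finset.Ico 1 L, (1 / Real.sqrt K) * ∑ i ∈ T k, |h i| := Finset.sum_le_sum hblock
    _ = (1 / Real.sqrt K) * ∑ k ∈ Finset.Ico 1 L, ∑ i ∈ T k, |h i| :=
        (Finset.mul_sum _ _ _).symm
    _ ≤ (1 / Real.sqrt K) * ∑ i ∈ (T 0)ᶜ, |h i| := by gcongr
end

section
/- Let x, h ∈ ℝ^N with ‖x + h‖₁ ≤ ‖x‖₁, and let T₀ ⊆ {1,…,N}. Then ‖h_{T₀ᶜ}‖₁ ≤ ‖h_{T₀}‖₁ + 2·‖x_{T₀ᶜ}‖₁, where T₀ᶜ = {1,…,N} \ T₀. -/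
open Finset MeasureTheory ProbabilityTheory Real

theorem cone_constraint
    {N : ℕ} (x h : Fin N → ℝ) (hxh : l1 (x + h) ≤ l1 x) (T₀ : Finset (Fin N)) :
    l1 (restrict h T₀ᶜ) ≤ l1 (restrict h T₀) + 2 * l1 (restrict x T₀ᶜ) := by
  unfold l1 at *
  -- By the triangle inequality, `|x i| ≤ |x i + h i| + |h i|` on `T₀` and
  -- `|h i| ≤ |x i + h i| + |x i|` off `T₀`. Summing over `i` and using
  -- `‖x + h‖₁ ≤ ‖x‖₁` gives the claim.
  have key : ∀ i, |restrict h T₀ᶜ i| + |x i| ≤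
      |restrict h T₀ i| + 2 * |restrict x T₀ᶜ i| + |(x + h) i| := by
    intro i
    have h₁ : |x i| ≤ |x i + h i| + |h i| := by
      simpa using abs_sub (x i + h i) (h i)
    have h₂ : |h i| ≤ |x i + h i| + |x i| := by
      simpa using abs_sub (x i + h i) (x i)
    by_cases hi : i ∈ T₀ <;> simp [_root_.restrict, hi] <;> linarith
  have hsum := Finset.sum_le_sum fun i (_ : i ∈ Finset.univ) => key i
  simp only [Finset.sum_add_distrib, ← Finset.mul_sum] at hsum
  linarith
end
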